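/- The function P(z) = (i/π)·η'(z)/η(z), where η is the Dedekind eta function, satisfies P|₂γ(z) := (cz+d)^{-2}P(γz) = P(z) − (c/(2πi))(cz+d)^{-1} for every γ = [[a,b],[c,d]] ∈ SL(2,Z) and z in the upper half-plane. -/

import Mathlib

/-!
The logarithmic derivative of `η` is `(πi/12) E₂`, so `P = -E₂/12`. The weight-2 law for `P` is thus
the quasi-modularity of `E₂`, namely `E₂|₂γ = E₂ - (1/(2ζ(2))) · 2πi c/(cz+d)` with `ζ(2) = π²/6`
(`EisensteinSeries.E2_slash_action`), multiplied by `-1/12`.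
-/

set_option autoImplicit false

open Matrix MatrixGroups Complex

/-- The automorphy factor `J(γ,z) = c z + d` for `γ = [[a,b],[c,d]] ∈ SL(2,ℤ)`, `z ∈ ℍ`. -/
noncomputable def J (γ : SL(2,ℤ)) (z : UpperHalfPlane) : ℂ :=
  ((γ : Matrix (Fin 2) (Fin 2) ℤ) 1 0 : ℂ) * z + ((γ : Matrix (Fin 2) (Fin 2) ℤ) 1 1 : ℂ)

/-- The Dedekind eta function `η(z) = q^{1/24} ∏_{n ≥ 1} (1 - q^n)`, `q = e^{2πiz}`,
regarded as a function of a complex variable (of interest for `Im z > 0`). -/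
noncomputable def DedekindEta (z : ℂ) : ℂ :=
  Complex.exp (Real.pi * Complex.I * z / 12) *
    ∏' n : ℕ, (1 - Complex.exp (2 * Real.pi * Complex.I * ((n : ℂ) + 1) * z))

/-- The function `P(z) = (i/π) η'(z)/η(z)`. -/
noncomputable def Pfun (z : ℂ) : ℂ :=
  Complex.I / Real.pi * (deriv DedekindEta z / DedekindEta z)

/-- The eta function defined above is Mathlib's: the factors `q^{n+1}` agree, and so do the
prefactors `q^{1/24}`. -/
lemma DedekindEta_eq_eta : DedekindEta = ModularForm.eta := by
  ext z
  simp only [DedekindEta, ModularForm.eta, ModularForm.eta_q_eq_cexp, Function.Periodic.qParam]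
  congr 2
  push_cast
  ring

lemma Pfun_eq_E2 (z : UpperHalfPlane) : Pfun z = -(1 / 12) * EisensteinSeries.E2 z := by
  have h := ModularForm.logDeriv_eta_eq_E2 z
  rw [logDeriv_apply] at h
  rw [Pfun, DedekindEta_eq_eta, h]
  field_simp
  simp

/-- The weight-2 transformation law of `P = (i/π) η'/η`:
`(cz+d)^{-2} P(γz) = P(z) - (c/(2πi)) (cz+d)^{-1}` for every `γ ∈ SL(2,ℤ)`, `z ∈ ℍ`. -/
theorem Pfun_slash_two (γ : SL(2,ℤ)) (z : UpperHalfPlane) :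
    ((J γ z) ^ (2 : ℕ))⁻¹ * Pfun ((γ • z : UpperHalfPlane) : ℂ) =
      Pfun z - ((γ : Matrix (Fin 2) (Fin 2) ℤ) 1 0 : ℂ) / (2 * Real.pi * Complex.I)
        * (J γ z)⁻¹ := by
  have hJ : UpperHalfPlane.denom γ z = J γ z := ModularGroup.denom_apply γ z
  have hJ0 : J γ z ≠ 0 := hJ ▸ UpperHalfPlane.denom_ne_zero γ z
  have h := congrFun (EisensteinSeries.E2_slash_action γ) z
  simp only [ModularForm.SL_slash_apply, Pi.sub_apply, Pi.smul_apply, smul_eq_mul,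
    EisensteinSeries.D2, riemannZeta_two, hJ] at h
  rw [_root_.zpow_neg, show (J γ z) ^ (2 : ℤ) = (J γ z) ^ (2 : ℕ) from zpow_ofNat _ 2] at h
  have hE : ((J γ z) ^ (2 : ℕ))⁻¹ * Pfun ((γ • z : UpperHalfPlane) : ℂ) =
      -(1 / 12) * (EisensteinSeries.E2 (γ • z) * ((J γ z) ^ (2 : ℕ))⁻¹) := by
    rw [Pfun_eq_E2]
    ring
  have hpi : (Real.pi : ℂ) ≠ 0 := mod_cast Real.pi_ne_zero
  rw [hE, h, Pfun_eq_E2]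
  field_simp
  grind [Complex.I_sq]
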